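/- arXiv:math/0303250 — 3 statements merged into one kernel-verified Lean document; each statement's English description precedes it below -/
import Mathlib

section
/- Let m ≥ 1 and 0 ≤ a ≤ m−1 be integers, and for complex q, x with |q| < 1, |x| < 1 define H_m^{(a)}(x) = Σ_{k₁,…,k_m ≥ 0} (x;q)_{k_m+1} · x^{k_m} · (∏_{i=1}^{a−1} q^{k_i²} x^{2k_i} [k_{i+1} choose k_i]_q) · q^{k_a²} x^{2k_a} [k_{a+1}+1 choose k_a]_q · (∏_{i=a+1}^{m−1} q^{k_i²+k_i} x^{2k_i} [k_{i+1} choose k_i]_q), with the convention k₀ = 0 when a = 0. Then H_m^{(a)} satisfies the q-difference equation H_m^{(a)}(x) = 1 − q^{a+1}·x^{2a+2} − q^{2m−a}·x^{2m+1}·H_m^{(a)}(q·x). -/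
/-- The finite q-Pochhammer symbol `(x;q)_n = ∏_{i=1}^n (1 - x q^{i-1})`. -/
noncomputable def qPoch (q x : ℂ) (n : ℕ) : ℂ := ∏ i ∈ Finset.range n, (1 - x * q ^ i)

/-- The Gaussian binomial coefficient `[n choose c]_q`. -/
noncomputable def qBinom (q : ℂ) (n c : ℕ) : ℂ :=
  if c ≤ n then qPoch q q n / (qPoch q q c * qPoch q q (n - c)) else 0

/-- Extends a tuple `(k₁,…,k_m)` to all of `ℕ` by `0` (in particular `k₀ = 0`). -/
def Kfun (m : ℕ) (k : Fin m → ℕ) (i : ℕ) : ℕ :=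
  if h : 1 ≤ i ∧ i ≤ m then k ⟨i - 1, by omega⟩ else 0

/-- The summand of the multiple series `H_m^{(a)}(x)`, with the convention `k₀ = 0`. -/
noncomputable def Hterm (q x : ℂ) (m a : ℕ) (k : Fin m → ℕ) : ℂ :=
  qPoch q x (Kfun m k m + 1) * x ^ (Kfun m k m) *
  (∏ i ∈ Finset.Ico 1 a,
    q ^ (Kfun m k i ^ 2) * x ^ (2 * Kfun m k i) * qBinom q (Kfun m k (i + 1)) (Kfun m k i)) *
  (q ^ (Kfun m k a ^ 2) * x ^ (2 * Kfun m k a) *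
    qBinom q (Kfun m k (a + 1) + 1) (Kfun m k a)) *
  (∏ i ∈ Finset.Ico (a + 1) m,
    q ^ (Kfun m k i ^ 2 + Kfun m k i) * x ^ (2 * Kfun m k i) *
      qBinom q (Kfun m k (i + 1)) (Kfun m k i))

/-- `H_m^{(a)}(x)` as a function of `x`. -/
noncomputable def Hm (q : ℂ) (m a : ℕ) (x : ℂ) : ℂ := ∑' k : Fin m → ℕ, Hterm q x m a k

/-!
The summations over `k₁, …, k_m` are successive steps of the Bailey chain, applied to the sequence
`1, 0, 0, …`. Each step acts diagonally on the kernels of the Bailey pair relation, with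
eigenvalues `λ_r = x^{2r} q^{r²}` relative to `x²` and `μ_r = x^{2r} q^{r²+r}` relative to `x² q`.
The `+ 1` in the exceptional binomial coefficient is what moves a Bailey pair from `x²` to `x² q`:
summation by parts in `r` turns the coefficients `λ_r^{a+1}` into their differences. Pairing a
kernel with `(x;q)_{n+1} x^n` has a closed form, and hence
`H_m^{(a)}(x) = ∑_r (-1)^r q^{r(r+1)/2} x^r (λ_r^{a+1} - λ_{r+1}^{a+1}) μ_r^{m-a-1}`.
The term `r = 0` is `1 - q^{a+1} x^{2a+2}`, and replacing `r` by `r + 1` amounts to replacing `x` by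
`q x` and multiplying by `-q^{2m-a} x^{2m+1}`.
-/

open Asymptotics Filter Finset

section QPoch

variable {q x : ℂ}

lemma qPoch_zero (q x : ℂ) : qPoch q x 0 = 1 := prod_range_zero _

lemma qPoch_succ (q x : ℂ) (n : ℕ) : qPoch q x (n + 1) = qPoch q x n * (1 - x * q ^ n) :=
  prod_range_succ _ n

lemma qPoch_add (q x : ℂ) (m n : ℕ) :
    qPoch q x (m + n) = qPoch q x m * qPoch q (x * q ^ m) n := by
  simp only [qPoch, prod_range_add, pow_add, mul_assoc]

lemma qPoch_succ' (q x : ℂ) (n : ℕ) : qPoch q x (n + 1) = (1 - x) * qPoch q (x * q) n := by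
  rw [add_comm, qPoch_add, qPoch_succ, qPoch_zero, pow_zero, mul_one, one_mul, pow_one]

lemma one_sub_mul_pow_ne_zero (hx : ∀ n, qPoch q x n ≠ 0) (n : ℕ) : 1 - x * q ^ n ≠ 0 :=
  right_ne_zero_of_mul (qPoch_succ q x n ▸ hx (n + 1))

lemma one_sub_pow_succ_ne_zero (hq : ∀ n, qPoch q q n ≠ 0) (n : ℕ) : 1 - q ^ (n + 1) ≠ 0 :=
  pow_succ' q n ▸ one_sub_mul_pow_ne_zero hq n

lemma qPoch_mul_pow_ne_zero (hx : ∀ n, qPoch q x n ≠ 0) (m n : ℕ) : qPoch q (x * q ^ m) n ≠ 0 :=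
  right_ne_zero_of_mul (qPoch_add q x m n ▸ hx (m + n))

lemma qPoch_mul_ne_zero (hx : ∀ n, qPoch q x n ≠ 0) (n : ℕ) : qPoch q (x * q) n ≠ 0 := by
  simpa using qPoch_mul_pow_ne_zero hx 1 n

lemma qPoch_ne_zero_of_norm_lt_one (hq : ‖q‖ < 1) (hx : ‖x‖ < 1) (n : ℕ) : qPoch q x n ≠ 0 := by
  refine prod_ne_zero_iff.mpr fun i _ h ↦ ?_
  have hlt : ‖x * q ^ i‖ < 1 := by
    rw [norm_mul, norm_pow]
    exact mul_lt_one_of_nonneg_of_lt_one_left (norm_nonneg x) hx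
      (pow_le_one₀ (norm_nonneg q) hq.le)
  rw [← sub_eq_zero.mp h, norm_one] at hlt
  exact lt_irrefl 1 hlt

lemma summable_norm_mul_pow (hq : ‖q‖ < 1) (x : ℂ) : Summable fun i : ℕ ↦ ‖-(x * q ^ i)‖ := by
  simpa only [norm_neg, norm_mul, norm_pow] using
    (summable_geometric_of_lt_one (norm_nonneg q) hq).mul_left ‖x‖

lemma tendsto_qPoch (hq : ‖q‖ < 1) (x : ℂ) :
    Tendsto (qPoch q x) atTop (nhds (∏' i : ℕ, (1 + -(x * q ^ i)))) :=
  (multipliable_one_add_of_summable (summable_norm_mul_pow hq x)).hasProd.tendsto_prod_nat.congr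
    fun n ↦ by simp only [qPoch, sub_eq_add_neg]

lemma isBigO_qPoch (hq : ‖q‖ < 1) (x : ℂ) : qPoch q x =O[⊤] fun _ ↦ (1 : ℝ) :=
  ((tendsto_qPoch hq x).isBigO_one ℝ).nat_of_atTop (by simp)

lemma isBigO_inv_qPoch (hq : ‖q‖ < 1) (hx : ∀ n, qPoch q x n ≠ 0) :
    (fun n ↦ (qPoch q x n)⁻¹) =O[⊤] fun _ ↦ (1 : ℝ) := by
  have hlim : ∏' i : ℕ, (1 + -(x * q ^ i)) ≠ 0 := by
    refine tprod_one_add_ne_zero_of_summable (fun i ↦ ?_) (summable_norm_mul_pow hq x)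
    rw [← sub_eq_add_neg]
    exact one_sub_mul_pow_ne_zero hx i
  exact (((tendsto_qPoch hq x).inv₀ hlim).isBigO_one ℝ).nat_of_atTop (by simp)

end QPoch

section QBinom

variable {q : ℂ} {n c : ℕ}

lemma qBinom_of_le (h : c ≤ n) : qBinom q n c = qPoch q q n / (qPoch q q c * qPoch q q (n - c)) :=
  if_pos h

lemma qBinom_of_lt (h : n < c) : qBinom q n c = 0 := if_neg h.not_ge

lemma qBinom_zero_right (hq : ∀ n, qPoch q q n ≠ 0) (n : ℕ) : qBinom q n 0 = 1 := by
  rw [qBinom_of_le n.zero_le, qPoch_zero, one_mul, Nat.sub_zero, div_self (hq n)]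

lemma one_sub_pow_mul_qBinom_succ_succ (hq : ∀ n, qPoch q q n ≠ 0) (h : c ≤ n) :
    (1 - q ^ (c + 1)) * qBinom q (n + 1) (c + 1) = (1 - q ^ (n + 1)) * qBinom q n c := by
  have hc := hq c
  have hnc := hq (n - c)
  have hfactor := one_sub_pow_succ_ne_zero hq c
  rw [qBinom_of_le (Nat.succ_le_succ h), qBinom_of_le h, Nat.succ_sub_succ, qPoch_succ, qPoch_succ,
    ← pow_succ', ← pow_succ']
  field_simp

lemma one_sub_pow_mul_qBinom_succ_right (hq : ∀ n, qPoch q q n ≠ 0) (h : c ≤ n) :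
    (1 - q ^ (c + 1)) * qBinom q n (c + 1) = (1 - q ^ (n - c)) * qBinom q n c := by
  obtain rfl | hlt := h.eq_or_lt
  · rw [qBinom_of_lt c.lt_succ_self, Nat.sub_self, pow_zero, sub_self, mul_zero, zero_mul]
  obtain ⟨d, rfl⟩ := Nat.exists_eq_add_of_lt hlt
  have hc := hq c
  have hd := hq d
  have hfactor_c := one_sub_pow_succ_ne_zero hq c
  have hfactor_d := one_sub_pow_succ_ne_zero hq d
  rw [qBinom_of_le hlt, qBinom_of_le h, show c + d + 1 - (c + 1) = d by lia,
    show c + d + 1 - c = d + 1 by lia, qPoch_succ q q c, qPoch_succ q q d, ← pow_succ', ← pow_succ']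
  field_simp

lemma qBinom_succ_succ (hq : ∀ n, qPoch q q n ≠ 0) (h : c ≤ n) :
    qBinom q (n + 1) (c + 1) = qBinom q n (c + 1) + q ^ (n - c) * qBinom q n c := by
  refine mul_left_cancel₀ (one_sub_pow_succ_ne_zero hq c) ?_
  have hpow : q ^ (n + 1) = q ^ (n - c) * q ^ (c + 1) := by rw [← pow_add]; congr 1; lia
  linear_combination one_sub_pow_mul_qBinom_succ_succ hq h
    - one_sub_pow_mul_qBinom_succ_right hq h - hpow * qBinom q n c

lemma isBigO_qBinom (hq : ‖q‖ < 1) :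
    (fun p : ℕ × ℕ ↦ qBinom q p.1 p.2) =O[⊤] fun _ ↦ (1 : ℝ) := by
  have hnum := isBigO_qPoch hq q
  have hden := isBigO_inv_qPoch hq (qPoch_ne_zero_of_norm_lt_one hq hq)
  have hquot : (fun p : ℕ × ℕ ↦
      qPoch q q p.1 * ((qPoch q q p.2)⁻¹ * (qPoch q q (p.1 - p.2))⁻¹)) =O[⊤] fun _ ↦ (1 : ℝ) := by
    simpa only [Function.comp_def, mul_one] using (hnum.comp_tendsto tendsto_top).mul
      ((hden.comp_tendsto tendsto_top).mul (hden.comp_tendsto tendsto_top))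
  refine .trans (.of_norm_le fun p ↦ ?_) hquot.norm_left
  obtain h | h := le_or_gt p.2 p.1
  · rw [qBinom_of_le h, div_eq_mul_inv, mul_inv]
  · rw [qBinom_of_lt h, norm_zero]
    exact norm_nonneg _

lemma pow_mul_qBinom_succ_succ_div_qPoch (hq : ∀ n, qPoch q q n ≠ 0) (B : ℂ) (h : c ≤ n) :
    B ^ (c + 1) * q ^ ((c + 1) ^ 2) * qBinom q (n + 1) (c + 1) / qPoch q (B * q) (c + 1)
      = B ^ (c + 1) * q ^ ((c + 1) ^ 2) * qBinom q n (c + 1) / qPoch q (B * q) (c + 1)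
        + B * q ^ (n + 1) / (1 - B * q)
          * ((B * q) ^ c * q ^ (c ^ 2) * qBinom q n c / qPoch q (B * q * q) c) := by
  have hpow : q ^ ((c + 1) ^ 2) * q ^ (n - c) = q ^ (n + 1) * q ^ c * q ^ (c ^ 2) := by
    rw [← pow_add, ← pow_add, ← pow_add]
    congr 1
    linarith [Nat.sub_add_cancel h]
  rw [qBinom_succ_succ hq h, qPoch_succ' q (B * q) c, div_mul_div_comm, ← add_div]
  congr 1
  linear_combination B ^ (c + 1) * qBinom q n c * hpow

/-- The limiting case of the `q`-Chu–Vandermonde sum in which one numerator parameter tends to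
infinity. -/
lemma sum_pow_mul_qBinom_div_qPoch (hq : ∀ n, qPoch q q n ≠ 0) {B : ℂ}
    (hB : ∀ n, qPoch q (B * q) n ≠ 0) (n : ℕ) :
    ∑ j ∈ range (n + 1), B ^ j * q ^ (j ^ 2) * qBinom q n j / qPoch q (B * q) j
      = (qPoch q (B * q) n)⁻¹ := by
  induction n generalizing B with
  | zero => simp [qPoch_zero, qBinom_zero_right hq]
  | succ n ih =>
    let term (B : ℂ) (n j : ℕ) : ℂ := B ^ j * q ^ (j ^ 2) * qBinom q n j / qPoch q (B * q) j
    have pascal : ∀ j ∈ range (n + 1), term B (n + 1) (j + 1)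
        = term B n (j + 1) + B * q ^ (n + 1) / (1 - B * q) * term (B * q) n j := fun j hj ↦
      pow_mul_qBinom_succ_succ_div_qPoch hq B (Nat.lt_succ_iff.mp (mem_range.mp hj))
    have sum_add_head : ∑ j ∈ range (n + 1), term B n (j + 1) + term B (n + 1) 0
        = (qPoch q (B * q) n)⁻¹ := by
      have hhead : term B (n + 1) 0 = term B n 0 := by simp only [term, qBinom_zero_right hq]
      have hlast : term B n (n + 1) = 0 := by
        simp only [term, qBinom_of_lt n.lt_succ_self, mul_zero, zero_div]
      rw [hhead, ← sum_range_succ' (term B n), sum_range_succ, hlast, add_zero, ih hB]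
    have hn := hB n
    have hfactor := one_sub_mul_pow_ne_zero hB n
    have hshift : (1 - B * q) * qPoch q (B * q * q) n
        = qPoch q (B * q) n * (1 - B * q * q ^ n) := by
      rw [← qPoch_succ', qPoch_succ]
    calc ∑ j ∈ range (n + 1 + 1), term B (n + 1) j
        = (qPoch q (B * q) n)⁻¹
          + B * q ^ (n + 1) / (1 - B * q) * (qPoch q (B * q * q) n)⁻¹ := by
          rw [sum_range_succ', sum_congr rfl pascal, sum_add_distrib, ← mul_sum,
            ih (qPoch_mul_ne_zero hB), add_right_comm, sum_add_head]
      _ = (qPoch q (B * q) (n + 1))⁻¹ := by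
          rw [← div_eq_mul_inv, div_div, hshift, qPoch_succ]
          field_simp
          ring

end QBinom

section BaileyPair

variable {q A : ℂ}

/-- The kernel `1 / ((q;q)_{n-r} (Aq;q)_{n+r})` of the Bailey pair relation, multiplied by
`(q;q)_n / (1 - A)`. In this normalisation the kernels with fixed `r` are eigenvectors of
`baileyTransform q A`. -/
noncomputable def baileyKernel (q A : ℂ) (r n : ℕ) : ℂ :=
  if r ≤ n then qPoch q q n / (qPoch q q (n - r) * qPoch q A (n + r + 1)) else 0

/-- One step of the Bailey chain with both free parameters sent to infinity, acting on sequences `β`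
multiplied by `(q;q)_n`. -/
noncomputable def baileyTransform (q A : ℂ) (β : ℕ → ℂ) (n : ℕ) : ℂ :=
  ∑ k ∈ range (n + 1), A ^ k * q ^ (k ^ 2) * qBinom q n k * β k

/-- The eigenvalue of `baileyTransform q A` on `baileyKernel q A r`. -/
noncomputable def baileyEigenvalue (q A : ℂ) (r : ℕ) : ℂ := A ^ r * q ^ (r ^ 2)

lemma isBigO_baileyEigenvalue (hq : ‖q‖ < 1) {ρ : ℝ} (hA : ‖A‖ ≤ ρ) :
    baileyEigenvalue q A =O[⊤] fun r ↦ ρ ^ r := by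
  refine .of_norm_le fun r ↦ ?_
  rw [baileyEigenvalue, norm_mul, norm_pow, norm_pow]
  exact (mul_le_of_le_one_right (by positivity) (pow_le_one₀ (norm_nonneg q) hq.le)).trans
    (pow_le_pow_left₀ (norm_nonneg A) hA r)

lemma baileyKernel_of_lt {r n : ℕ} (h : n < r) : baileyKernel q A r n = 0 := if_neg h.not_ge

lemma baileyKernel_add (q A : ℂ) (r d : ℕ) :
    baileyKernel q A r (r + d)
      = qPoch q q (r + d) / (qPoch q q d * qPoch q A (2 * r + 1 + d)) := by
  rw [baileyKernel, if_pos (by lia), show r + d - r = d by lia,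
    show r + d + r + 1 = 2 * r + 1 + d by lia]

lemma one_sub_mul_baileyKernel_succ_left (hq : ∀ n, qPoch q q n ≠ 0) (hA : ∀ n, qPoch q A n ≠ 0)
    (r n : ℕ) :
    (1 - A * q ^ (n + r + 1)) * baileyKernel q A (r + 1) n
      = (1 - q ^ (n - r)) * baileyKernel q A r n := by
  obtain hlt | rfl | hlt := lt_trichotomy n r
  · rw [baileyKernel_of_lt hlt, baileyKernel_of_lt (by lia), mul_zero, mul_zero]
  · rw [baileyKernel_of_lt n.lt_succ_self, Nat.sub_self, pow_zero, sub_self, mul_zero, zero_mul]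
  obtain ⟨d, rfl⟩ := Nat.exists_eq_add_of_lt hlt
  have hd := hq d
  have hA' := hA (r + d + 1 + r + 1)
  have hfactor_d := one_sub_pow_succ_ne_zero hq d
  have hfactor_A := one_sub_mul_pow_ne_zero hA (r + d + 1 + r + 1)
  rw [baileyKernel, baileyKernel, if_pos (Nat.succ_le_of_lt hlt), if_pos hlt.le,
    show r + d + 1 - (r + 1) = d by lia, show r + d + 1 - r = d + 1 by lia, qPoch_succ q q d,
    ← pow_succ', ← add_assoc _ r 1, qPoch_succ q A (r + d + 1 + r + 1)]
  field_simp

lemma one_sub_mul_baileyKernel_succ_succ (hA : ∀ n, qPoch q A n ≠ 0) (r n : ℕ) :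
    (1 - A * q ^ (n + r + 1)) * (1 - A * q ^ (n + r + 2)) * baileyKernel q A (r + 1) (n + 1)
      = (1 - q ^ (n + 1)) * baileyKernel q A r n := by
  obtain hlt | hle := lt_or_ge n r
  · rw [baileyKernel_of_lt hlt, baileyKernel_of_lt (by lia), mul_zero, mul_zero]
  have hfactor := one_sub_mul_pow_ne_zero hA (n + r + 1)
  have hfactor' := one_sub_mul_pow_ne_zero hA (n + r + 2)
  rw [baileyKernel, baileyKernel, if_pos hle, if_pos (Nat.succ_le_succ hle), Nat.succ_sub_succ,
    show n + 1 + (r + 1) + 1 = n + r + 1 + 1 + 1 by lia, qPoch_succ q A (n + r + 1 + 1),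
    qPoch_succ q A (n + r + 1), qPoch_succ q q n, ← pow_succ']
  field_simp

lemma one_sub_mul_baileyKernel_succ_succ_mul (hA : ∀ n, qPoch q A n ≠ 0) (r n : ℕ) :
    (1 - A) * (1 - A * q ^ (n + r + 2)) * baileyKernel q A (r + 1) (n + 1)
      = (1 - q ^ (n + 1)) * baileyKernel q (A * q) r n := by
  obtain hlt | hle := lt_or_ge n r
  · rw [baileyKernel_of_lt hlt, baileyKernel_of_lt (by lia), mul_zero, mul_zero]
  have hfactor : 1 - A ≠ 0 := by simpa using one_sub_mul_pow_ne_zero hA 0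
  have hfactor' := one_sub_mul_pow_ne_zero hA (n + r + 2)
  rw [baileyKernel, baileyKernel, if_pos hle, if_pos (Nat.succ_le_succ hle), Nat.succ_sub_succ,
    show n + 1 + (r + 1) + 1 = n + r + 2 + 1 by lia, qPoch_succ q A (n + r + 2),
    qPoch_succ' q A (n + r + 1), qPoch_succ q q n, ← pow_succ']
  field_simp

lemma isBigO_baileyKernel (hq : ‖q‖ < 1) (hA : ∀ n, qPoch q A n ≠ 0) :
    (fun p : ℕ × ℕ ↦ baileyKernel q A p.1 p.2) =O[⊤] fun _ ↦ (1 : ℝ) := by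
  have hnum := isBigO_qPoch hq q
  have hden := isBigO_inv_qPoch hq (qPoch_ne_zero_of_norm_lt_one hq hq)
  have hdenA := isBigO_inv_qPoch hq hA
  have hquot : (fun p : ℕ × ℕ ↦ qPoch q q p.2 *
      ((qPoch q q (p.2 - p.1))⁻¹ * (qPoch q A (p.2 + p.1 + 1))⁻¹)) =O[⊤] fun _ ↦ (1 : ℝ) := by
    simpa only [Function.comp_def, mul_one] using (hnum.comp_tendsto tendsto_top).mul
      ((hden.comp_tendsto tendsto_top).mul (hdenA.comp_tendsto tendsto_top))
  refine .trans (.of_norm_le fun p ↦ ?_) hquot.norm_left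
  obtain h | h := le_or_gt p.1 p.2
  · rw [baileyKernel, if_pos h, div_eq_mul_inv, mul_inv]
  · rw [baileyKernel_of_lt h, norm_zero]
    exact norm_nonneg _

theorem baileyTransform_baileyKernel (hq : ∀ n, qPoch q q n ≠ 0) (hA : ∀ n, qPoch q A n ≠ 0)
    (r n : ℕ) :
    baileyTransform q A (baileyKernel q A r) n = baileyEigenvalue q A r * baileyKernel q A r n := by
  obtain hlt | hle := lt_or_ge n r
  · rw [baileyKernel_of_lt hlt, mul_zero]
    refine sum_eq_zero fun k hk ↦ ?_
    rw [baileyKernel_of_lt ((Nat.lt_succ_iff.mp (mem_range.mp hk)).trans_lt hlt), mul_zero]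
  obtain ⟨N, rfl⟩ := Nat.exists_eq_add_of_le hle
  have hB : ∀ j, qPoch q (A * q ^ (2 * r) * q) j ≠ 0 :=
    qPoch_mul_ne_zero (qPoch_mul_pow_ne_zero hA (2 * r))
  have split_qPoch (j : ℕ) :
      qPoch q A (2 * r + 1 + j) = qPoch q A (2 * r + 1) * qPoch q (A * q ^ (2 * r) * q) j := by
    rw [qPoch_add, pow_succ, mul_assoc]
  set c := baileyEigenvalue q A r * qPoch q q (r + N) / (qPoch q q N * qPoch q A (2 * r + 1))
    with hc
  have term_eq : ∀ j ∈ range (N + 1),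
      A ^ (r + j) * q ^ ((r + j) ^ 2) * qBinom q (r + N) (r + j) * baileyKernel q A r (r + j)
        = c * ((A * q ^ (2 * r)) ^ j * q ^ (j ^ 2) * qBinom q N j
          / qPoch q (A * q ^ (2 * r) * q) j) := by
    intro j hj
    have hjN : j ≤ N := Nat.lt_succ_iff.mp (mem_range.mp hj)
    have hN := hq N
    have hrj := hq (r + j)
    rw [baileyKernel_add, split_qPoch, qBinom_of_le (by lia), qBinom_of_le hjN,
      Nat.add_sub_add_left, hc, baileyEigenvalue]
    field_simp
    ring
  rw [baileyTransform, add_assoc, sum_range_add, sum_eq_zero (s := range r), zero_add,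
    sum_congr rfl term_eq, ← mul_sum, sum_pow_mul_qBinom_div_qPoch hq hB, baileyKernel_add,
    split_qPoch, hc]
  · ring
  · intro k hk
    rw [baileyKernel_of_lt (mem_range.mp hk), mul_zero]

/-- `(α, β)` is a Bailey pair relative to `A`, with `β` multiplied by `(q;q)_n` and `α` by `1 - A`
compared with the classical normalisation. -/
def IsBaileyPair (q A : ℂ) (α β : ℕ → ℂ) : Prop :=
  ∀ n, β n = ∑ r ∈ range (n + 1), α r * baileyKernel q A r n

/-- The sequence `α` of the unit Bailey pair relative to `A`, whose `β` is `1, 0, 0, …`. -/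
noncomputable def unitBaileyAlpha (q A : ℂ) (r : ℕ) : ℂ :=
  (1 - A * q ^ (2 * r)) * qPoch q A r * (-1) ^ r * q ^ r.choose 2 / qPoch q q r

/-- The coefficients expressing the shifted kernels `unitBaileyAlpha q A r * baileyKernel q A r
(n + 1)` as backward differences in `r` of multiples of `baileyKernel q (A * q) r n`. -/
noncomputable def shiftedBaileyAlpha (q A : ℂ) (r : ℕ) : ℂ :=
  qPoch q (A * q) r * (-1) ^ r * q ^ (r + 1).choose 2 / qPoch q q r

lemma IsBaileyPair.eq_sum {α β : ℕ → ℂ} (h : IsBaileyPair q A α β) {n N : ℕ} (hN : n < N) :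
    β n = ∑ r ∈ range N, α r * baileyKernel q A r n := by
  rw [h n]
  refine sum_subset (range_subset_range.mpr hN) fun r _ hr ↦ ?_
  rw [baileyKernel_of_lt (by simpa [Nat.succ_le_iff] using hr), mul_zero]

theorem IsBaileyPair.transform (hq : ∀ n, qPoch q q n ≠ 0) (hA : ∀ n, qPoch q A n ≠ 0)
    {α β : ℕ → ℂ} (h : IsBaileyPair q A α β) :
    IsBaileyPair q A (fun r ↦ α r * baileyEigenvalue q A r) (baileyTransform q A β) := by
  intro n
  calc baileyTransform q A β n
      = ∑ k ∈ range (n + 1), ∑ r ∈ range (n + 1),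
          α r * (A ^ k * q ^ (k ^ 2) * qBinom q n k * baileyKernel q A r k) := by
        refine sum_congr rfl fun k hk ↦ ?_
        rw [h.eq_sum (mem_range.mp hk), mul_sum]
        exact sum_congr rfl fun r _ ↦ mul_left_comm _ _ _
    _ = ∑ r ∈ range (n + 1), α r * baileyTransform q A (baileyKernel q A r) n := by
        rw [sum_comm]
        exact sum_congr rfl fun r _ ↦ (mul_sum _ _ _).symm
    _ = ∑ r ∈ range (n + 1), α r * baileyEigenvalue q A r * baileyKernel q A r n := by
        simp only [baileyTransform_baileyKernel hq hA, mul_assoc]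

theorem IsBaileyPair.iterate_transform (hq : ∀ n, qPoch q q n ≠ 0)
    (hA : ∀ n, qPoch q A n ≠ 0) {α β : ℕ → ℂ} (h : IsBaileyPair q A α β) (j : ℕ) :
    IsBaileyPair q A (fun r ↦ α r * baileyEigenvalue q A r ^ j)
      ((baileyTransform q A)^[j] β) := by
  induction j with
  | zero => simpa using h
  | succ j ih =>
    simpa only [Function.iterate_succ_apply', pow_succ, mul_assoc] using ih.transform hq hA

lemma choose_two_succ (n : ℕ) : (n + 1).choose 2 = n + n.choose 2 := by
  rw [Nat.choose_succ_succ', Nat.choose_one_right]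

lemma unitBaileyAlpha_mul_baileyKernel_zero (hq : ∀ n, qPoch q q n ≠ 0)
    (hA : ∀ n, qPoch q A n ≠ 0) (n : ℕ) :
    unitBaileyAlpha q A 0 * baileyKernel q A 0 (n + 1)
      = shiftedBaileyAlpha q A 0 * baileyKernel q (A * q) 0 n := by
  have hfactor : 1 - A ≠ 0 := by simpa using one_sub_mul_pow_ne_zero hA 0
  have hn := hq n
  have hn' := hq (n + 1)
  simp only [unitBaileyAlpha, shiftedBaileyAlpha, baileyKernel, qPoch_zero, qPoch_succ' q A,
    Nat.zero_le, if_true, Nat.sub_zero, Nat.choose_eq_zero_of_lt, zero_lt_two, Nat.one_lt_two,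
    zero_add, mul_zero, add_zero, pow_zero, mul_one, div_one]
  field_simp

lemma unitBaileyAlpha_mul_baileyKernel_succ (hq : ∀ n, qPoch q q n ≠ 0)
    (hA : ∀ n, qPoch q A n ≠ 0) (r n : ℕ) :
    unitBaileyAlpha q A (r + 1) * baileyKernel q A (r + 1) (n + 1)
      = shiftedBaileyAlpha q A (r + 1) * baileyKernel q (A * q) (r + 1) n
        - shiftedBaileyAlpha q A r * baileyKernel q (A * q) r n := by
  obtain hlt | hle := lt_or_ge n r
  · simp [baileyKernel_of_lt, hlt, hlt.trans r.lt_succ_self]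
  obtain ⟨d, rfl⟩ := Nat.exists_eq_add_of_le hle
  have hA0 : 1 - A ≠ 0 := by simpa using one_sub_mul_pow_ne_zero hA 0
  have hAn := one_sub_mul_pow_ne_zero hA (r + d + r + 2)
  have hr := hq r
  have hfactor := one_sub_pow_succ_ne_zero hq r
  have diagonal : baileyKernel q A (r + 1) (r + d + 1)
      = (1 - q ^ (r + d + 1)) * baileyKernel q (A * q) r (r + d)
        / ((1 - A) * (1 - A * q ^ (r + d + r + 2))) := by
    rw [eq_div_iff (mul_ne_zero hA0 hAn), mul_comm]
    exact one_sub_mul_baileyKernel_succ_succ_mul hA r (r + d)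
  have neighbour : baileyKernel q (A * q) (r + 1) (r + d)
      = (1 - q ^ d) * baileyKernel q (A * q) r (r + d) / (1 - A * q ^ (r + d + r + 2)) := by
    rw [eq_div_iff hAn, mul_comm, pow_succ' q (r + d + r + 1), ← mul_assoc A,
      one_sub_mul_baileyKernel_succ_left hq (qPoch_mul_ne_zero hA), Nat.add_sub_cancel_left]
  rw [diagonal, neighbour, unitBaileyAlpha, shiftedBaileyAlpha, shiftedBaileyAlpha,
    qPoch_succ' q A r, qPoch_succ q (A * q) r, qPoch_succ q q r, ← pow_succ', choose_two_succ,
    choose_two_succ (r + 1), choose_two_succ r]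
  field_simp
  ring

lemma sum_unitBaileyAlpha_mul_baileyKernel (hq : ∀ n, qPoch q q n ≠ 0)
    (hA : ∀ n, qPoch q A n ≠ 0) (c : ℕ → ℂ) (n : ℕ) :
    ∑ r ∈ range (n + 2), unitBaileyAlpha q A r * c r * baileyKernel q A r (n + 1)
      = ∑ r ∈ range (n + 1),
          shiftedBaileyAlpha q A r * (c r - c (r + 1)) * baileyKernel q (A * q) r n := by
  have by_parts (N : ℕ) :
      ∑ r ∈ range (N + 1), unitBaileyAlpha q A r * c r * baileyKernel q A r (n + 1)
        = ∑ r ∈ range N, shiftedBaileyAlpha q A r * (c r - c (r + 1)) * baileyKernel q (A * q) r n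
          + shiftedBaileyAlpha q A N * c N * baileyKernel q (A * q) N n := by
    induction N with
    | zero =>
      rw [sum_range_one, sum_range_zero]
      linear_combination c 0 * unitBaileyAlpha_mul_baileyKernel_zero hq hA n
    | succ N ih =>
      rw [sum_range_succ, ih, sum_range_succ]
      linear_combination c (N + 1) * unitBaileyAlpha_mul_baileyKernel_succ hq hA N n
  rw [by_parts, baileyKernel_of_lt n.lt_succ_self, mul_zero, add_zero]

theorem isBaileyPair_unit (hq : ∀ n, qPoch q q n ≠ 0) (hA : ∀ n, qPoch q A n ≠ 0) :
    IsBaileyPair q A (unitBaileyAlpha q A) (Pi.single 0 1) := by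
  rintro (_ | n)
  · have hfactor : 1 - A ≠ 0 := by simpa using one_sub_mul_pow_ne_zero hA 0
    simp [unitBaileyAlpha, baileyKernel, qPoch_zero, qPoch_succ, hfactor]
  · simpa using (sum_unitBaileyAlpha_mul_baileyKernel hq hA (fun _ ↦ 1) n).symm

theorem IsBaileyPair.shift (hq : ∀ n, qPoch q q n ≠ 0) (hA : ∀ n, qPoch q A n ≠ 0)
    {c β : ℕ → ℂ} (h : IsBaileyPair q A (fun r ↦ unitBaileyAlpha q A r * c r) β) :
    IsBaileyPair q (A * q) (fun r ↦ shiftedBaileyAlpha q A r * (c r - c (r + 1)))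
      (fun n ↦ β (n + 1)) :=
  fun n ↦ (h (n + 1)).trans (sum_unitBaileyAlpha_mul_baileyKernel hq hA c n)

end BaileyPair

section Pairing

variable {q x : ℂ}

lemma isBigO_qPoch_succ_mul_pow (hq : ‖q‖ < 1) (x : ℂ) :
    (fun n ↦ qPoch q x (n + 1) * x ^ n) =O[⊤] fun n ↦ ‖x‖ ^ n := by
  have hpow : (x ^ · : ℕ → ℂ) =O[⊤] (‖x‖ ^ · : ℕ → ℝ) := .of_norm_le fun n ↦ (norm_pow x n).le
  simpa only [Function.comp_def, one_mul] using
    ((isBigO_qPoch hq x).comp_tendsto (k := (· + 1)) tendsto_top).mul hpow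

lemma norm_sq_lt_one (hx : ‖x‖ < 1) : ‖x ^ 2‖ < 1 := by
  rw [norm_pow]
  exact pow_lt_one₀ (norm_nonneg x) hx two_ne_zero

lemma norm_sq_mul_lt_one (hq : ‖q‖ < 1) (hx : ‖x‖ < 1) : ‖x ^ 2 * q‖ < 1 := by
  rw [norm_mul]
  exact mul_lt_one_of_nonneg_of_lt_one_right (norm_sq_lt_one hx).le (norm_nonneg q) hq

lemma qPoch_sq_mul_ne_zero (hq : ‖q‖ < 1) (hx : ‖x‖ < 1) (n : ℕ) : qPoch q (x ^ 2 * q) n ≠ 0 :=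
  qPoch_ne_zero_of_norm_lt_one hq (norm_sq_mul_lt_one hq hx) n

/-- The summand of the pairing of `baileyKernel q (x ^ 2 * q) r` with the weight
`(x;q)_{n+1} x ^ n` of the outermost summation in `Hm`. -/
noncomputable def pairedKernel (q x : ℂ) (r n : ℕ) : ℂ :=
  qPoch q x (n + 1) * x ^ n * baileyKernel q (x ^ 2 * q) r n

lemma isBigO_pairedKernel (hq : ‖q‖ < 1) (hx : ‖x‖ < 1) :
    (fun p : ℕ × ℕ ↦ pairedKernel q x p.1 p.2) =O[⊤] fun p ↦ ‖x‖ ^ p.2 := by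
  simpa only [Function.comp_def, mul_one, pairedKernel] using
    ((isBigO_qPoch_succ_mul_pow hq x).comp_tendsto (k := Prod.snd) tendsto_top).mul
      (isBigO_baileyKernel hq (qPoch_sq_mul_ne_zero hq hx))

lemma summable_pairedKernel (hq : ‖q‖ < 1) (hx : ‖x‖ < 1) (r : ℕ) :
    Summable (pairedKernel q x r) :=
  summable_of_isBigO (summable_geometric_of_lt_one (norm_nonneg x) hx)
    (((isBigO_pairedKernel hq hx).comp_tendsto (k := fun n ↦ (r, n)) tendsto_top).mono le_top)

lemma hasSum_pairedKernel_zero (hq : ‖q‖ < 1) (hx : ‖x‖ < 1) :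
    HasSum (pairedKernel q x 0) 1 := by
  have hA := qPoch_sq_mul_ne_zero hq hx
  set w : ℕ → ℂ := fun n ↦ qPoch q (x * q) n * (qPoch q (x ^ 2 * q) n)⁻¹ * x ^ n with hw
  have difference (n : ℕ) : pairedKernel q x 0 n = w n - w (n + 1) := by
    have hqn := qPoch_ne_zero_of_norm_lt_one hq hq n
    have hAn := hA n
    have hfactor := one_sub_mul_pow_ne_zero hA n
    rw [hw, pairedKernel, baileyKernel, if_pos n.zero_le, qPoch_succ', add_zero, Nat.sub_zero]
    simp only [qPoch_succ q _ n]
    field_simp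
    ring
  have hw_tendsto : Tendsto w atTop (nhds 0) := by
    have hbound := (isBigO_qPoch hq (x * q)).mul (isBigO_inv_qPoch hq hA)
    refine ((hbound.mul (isBigO_refl (x ^ ·) ⊤).norm_right).mono le_top).trans_tendsto ?_
    simpa using tendsto_pow_atTop_nhds_zero_of_lt_one (norm_nonneg x) hx
  have partial_sum (N : ℕ) : ∑ n ∈ range N, pairedKernel q x 0 n = 1 - w N := by
    simp only [difference, sum_range_sub']
    simp [hw, qPoch_zero]
  rw [(summable_pairedKernel hq hx 0).hasSum_iff_tendsto_nat]
  simpa only [partial_sum, sub_zero] using hw_tendsto.const_sub 1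

lemma pairedKernel_succ_sub_pairedKernel (hq : ∀ n, qPoch q q n ≠ 0)
    (hA : ∀ n, qPoch q (x ^ 2 * q) n ≠ 0) (r n : ℕ) :
    (1 - x ^ 2 * q * q ^ r) * pairedKernel q x (r + 1) n
        - x * (1 - q ^ (r + 1)) * pairedKernel q x r n
      = (1 + x * q ^ (r + 1)) *
        ((1 - x ^ 2 * q * q ^ (n + (r + 1))) * pairedKernel q x (r + 1) n
          - (1 - x ^ 2 * q * q ^ (n + 1 + (r + 1))) * pairedKernel q x (r + 1) (n + 1)) := by
  simp only [pairedKernel]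
  obtain hlt | hle := lt_or_ge n r
  · simp [baileyKernel_of_lt, hlt, hlt.trans r.lt_succ_self]
  obtain ⟨d, rfl⟩ := Nat.exists_eq_add_of_le hle
  have up := one_sub_mul_baileyKernel_succ_succ hA r (r + d)
  have left := one_sub_mul_baileyKernel_succ_left hq hA r (r + d)
  rw [Nat.add_sub_cancel_left] at left
  rw [qPoch_succ q x (r + d + 1)]
  refine mul_left_cancel₀ (one_sub_mul_pow_ne_zero hA (r + d + r + 1)) ?_
  linear_combination qPoch q x (r + d + 1) * x ^ (r + d) * (
    (1 - x ^ 2 * q * q ^ r - (1 + x * q ^ (r + 1)) * (1 - x ^ 2 * q * q ^ (r + d + r + 1))) * left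
      + (1 + x * q ^ (r + 1)) * (1 - x * q ^ (r + d + 1)) * x * up)

lemma tsum_pairedKernel_succ (hq : ‖q‖ < 1) (hx : ‖x‖ < 1) (r : ℕ) :
    (1 - x ^ 2 * q * q ^ r) * ∑' n, pairedKernel q x (r + 1) n
      = x * (1 - q ^ (r + 1)) * ∑' n, pairedKernel q x r n := by
  have hf := summable_pairedKernel hq hx r
  have hf' := summable_pairedKernel hq hx (r + 1)
  set G : ℕ → ℂ := fun n ↦ (1 - x ^ 2 * q * q ^ (n + (r + 1))) * pairedKernel q x (r + 1) n
    with hG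
  have hG_tendsto : Tendsto G atTop (nhds 0) := by
    have hpow : Tendsto (fun n ↦ q ^ (n + (r + 1))) atTop (nhds 0) :=
      (tendsto_pow_atTop_nhds_zero_of_norm_lt_one hq).comp (tendsto_add_atTop_nat (r + 1))
    simpa only [mul_zero] using ((hpow.const_mul _).const_sub 1).mul hf'.tendsto_atTop_zero
  have hG_zero : G 0 = 0 := by
    simp [hG, pairedKernel, baileyKernel_of_lt]
  have hsum := ((hf'.hasSum.mul_left (1 - x ^ 2 * q * q ^ r)).sub
    (hf.hasSum.mul_left (x * (1 - q ^ (r + 1))))).tendsto_sum_nat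
  have partial_sum (N : ℕ) :
      ∑ n ∈ range N, ((1 - x ^ 2 * q * q ^ r) * pairedKernel q x (r + 1) n
        - x * (1 - q ^ (r + 1)) * pairedKernel q x r n) = (1 + x * q ^ (r + 1)) * (G 0 - G N) := by
    rw [← sum_range_sub' G, mul_sum]
    exact sum_congr rfl fun n _ ↦ pairedKernel_succ_sub_pairedKernel
      (qPoch_ne_zero_of_norm_lt_one hq hq) (qPoch_sq_mul_ne_zero hq hx) r n
  simp only [partial_sum] at hsum
  have hlim := (hG_tendsto.const_sub (G 0)).const_mul (1 + x * q ^ (r + 1))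
  rw [hG_zero, sub_zero, mul_zero] at hlim
  exact sub_eq_zero.mp (tendsto_nhds_unique hsum (by simpa only [hG_zero] using hlim))

theorem tsum_pairedKernel (hq : ‖q‖ < 1) (hx : ‖x‖ < 1) (r : ℕ) :
    ∑' n, pairedKernel q x r n = qPoch q q r * x ^ r / qPoch q (x ^ 2 * q) r := by
  have hA := qPoch_sq_mul_ne_zero hq hx
  induction r with
  | zero => simp [(hasSum_pairedKernel_zero hq hx).tsum_eq, qPoch_zero]
  | succ r ih =>
    have hr := hA r
    have hfactor := one_sub_mul_pow_ne_zero hA r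
    refine mul_left_cancel₀ hfactor ?_
    rw [tsum_pairedKernel_succ hq hx, ih, qPoch_succ, qPoch_succ, ← pow_succ']
    field_simp
    ring

lemma summable_mul_pairedKernel (hq : ‖q‖ < 1) (hx : ‖x‖ < 1) {α : ℕ → ℂ} (hα : Summable α) :
    Summable fun p : ℕ × ℕ ↦ α p.1 * pairedKernel q x p.1 p.2 := by
  have hgeom := summable_geometric_of_lt_one (norm_nonneg x) hx
  refine summable_of_isBigO (hα.norm.mul_of_nonneg hgeom (fun r ↦ norm_nonneg (α r)) fun n ↦ by
    positivity) ?_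
  exact ((isBigO_refl (fun p : ℕ × ℕ ↦ α p.1) ⊤).norm_right.mul
    (isBigO_pairedKernel hq hx)).mono le_top

theorem IsBaileyPair.hasSum (hq : ‖q‖ < 1) (hx : ‖x‖ < 1) {α β : ℕ → ℂ}
    (h : IsBaileyPair q (x ^ 2 * q) α β) (hα : Summable α) :
    HasSum (fun r ↦ α r * (qPoch q q r * x ^ r / qPoch q (x ^ 2 * q) r))
      (∑' n, qPoch q x (n + 1) * x ^ n * β n) := by
  have hdouble := summable_mul_pairedKernel hq hx hα
  have inner_r (n : ℕ) :
      HasSum (fun r ↦ α r * pairedKernel q x r n) (qPoch q x (n + 1) * x ^ n * β n) := by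
    have hfinite : HasSum (fun r ↦ α r * baileyKernel q (x ^ 2 * q) r n) (β n) := by
      rw [h n]
      refine hasSum_sum_of_ne_finset_zero fun r hr ↦ ?_
      rw [baileyKernel_of_lt (by simpa [Nat.succ_le_iff] using hr), mul_zero]
    simpa only [pairedKernel, mul_left_comm] using hfinite.mul_left (qPoch q x (n + 1) * x ^ n)
  have inner_n (r : ℕ) : HasSum (fun n ↦ α r * pairedKernel q x r n)
      (α r * (qPoch q q r * x ^ r / qPoch q (x ^ 2 * q) r)) := by
    rw [← tsum_pairedKernel hq hx]
    exact (summable_pairedKernel hq hx r).hasSum.mul_left (α r)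
  have hswap := ((Equiv.prodComm ℕ ℕ).hasSum_iff.mpr hdouble.hasSum).prod_fiberwise inner_r
  rw [hswap.tsum_eq]
  exact hdouble.hasSum.prod_fiberwise inner_n

end Pairing

section Chain

lemma summable_prod_pi {ι : Type*} {f : ι → ℝ} (hf₀ : ∀ i, 0 ≤ f i) (hf : Summable f) (m : ℕ) :
    Summable fun k : Fin m → ι ↦ ∏ i, f (k i) := by
  induction m with
  | zero => exact .of_finite
  | succ m ih =>
    rw [← (Fin.consEquiv fun _ ↦ ι).summable_iff]
    simpa [Function.comp_def, Fin.consEquiv, Fin.prod_univ_succ] using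
      hf.mul_of_nonneg ih hf₀ fun k ↦ prod_nonneg fun i _ ↦ hf₀ (k i)

lemma Kfun_zero {m : ℕ} (k : Fin m → ℕ) : Kfun m k 0 = 0 := dif_neg (by simp)

lemma Kfun_val_succ {m : ℕ} (k : Fin m → ℕ) (i : Fin m) : Kfun m k (i + 1) = k i :=
  dif_pos ⟨by lia, i.isLt⟩

lemma Kfun_snoc_of_le {m : ℕ} (k : Fin m → ℕ) (n : ℕ) {i : ℕ} (hi : i ≤ m) :
    Kfun (m + 1) (Fin.snoc (α := fun _ ↦ ℕ) k n) i = Kfun m k i := by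
  obtain _ | i := i
  · rw [Kfun_zero, Kfun_zero]
  · exact (Kfun_val_succ _ (Fin.castSucc ⟨i, hi⟩)).trans <|
      (Fin.snoc_castSucc ..).trans (Kfun_val_succ k ⟨i, hi⟩).symm

lemma Kfun_snoc_last {m : ℕ} (k : Fin m → ℕ) (n : ℕ) :
    Kfun (m + 1) (Fin.snoc (α := fun _ ↦ ℕ) k n) (m + 1) = n :=
  (Kfun_val_succ _ (Fin.last m)).trans (Fin.snoc_last ..)

/-- Iterated transfer of the unit sequence by `w`: `chainSum w m n` is the sum of
`w 0 k₀ k₁ * ⋯ * w (m - 1) k_{m-1} n` over `k₁, …, k_{m-1}`, where `k₀ = 0`. -/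
noncomputable def chainSum (w : ℕ → ℕ → ℕ → ℂ) : ℕ → ℕ → ℂ
  | 0 => Pi.single 0 1
  | m + 1 => fun n ↦ ∑' j, w m j n * chainSum w m j

variable {w : ℕ → ℕ → ℕ → ℂ} {φ : ℕ → ℂ} {ρ : ℝ}

lemma summable_mul_prod_Kfun (hρ₀ : 0 ≤ ρ) (hρ : ρ < 1)
    (hw : ∀ i, (fun p : ℕ × ℕ ↦ w i p.1 p.2) =O[⊤] fun p ↦ ρ ^ p.1)
    (hφ : φ =O[⊤] fun n ↦ ρ ^ n) (m : ℕ) :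
    Summable fun k : Fin m → ℕ ↦
      φ (Kfun m k m) * ∏ i ∈ range m, w i (Kfun m k i) (Kfun m k (i + 1)) := by
  have hgeom := summable_prod_pi (fun n ↦ pow_nonneg hρ₀ n) (summable_geometric_of_lt_one hρ₀ hρ) m
  refine summable_of_isBigO hgeom (IsBigO.mono ?_ le_top)
  have hprod := (hφ.comp_tendsto (k := fun k : Fin m → ℕ ↦ Kfun m k m) (l' := ⊤) tendsto_top).mul
    (IsBigO.finsetProd (s := range m) fun i _ ↦ (hw i).comp_tendsto
      (k := fun k : Fin m → ℕ ↦ (Kfun m k i, Kfun m k (i + 1))) tendsto_top)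
  refine hprod.congr_right fun k ↦ ?_
  simp only [Function.comp_apply]
  rw [mul_comm, ← prod_range_succ (fun i ↦ ρ ^ Kfun m k i), prod_range_succ', Kfun_zero, pow_zero,
    mul_one, prod_range]
  simp only [Kfun_val_succ]

theorem tsum_mul_prod_Kfun (hρ₀ : 0 ≤ ρ) (hρ : ρ < 1)
    (hw : ∀ i, (fun p : ℕ × ℕ ↦ w i p.1 p.2) =O[⊤] fun p ↦ ρ ^ p.1)
    (hφ : φ =O[⊤] fun n ↦ ρ ^ n) (m : ℕ) :
    ∑' k : Fin m → ℕ, φ (Kfun m k m) * ∏ i ∈ range m, w i (Kfun m k i) (Kfun m k (i + 1))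
      = ∑' n, φ n * chainSum w m n := by
  induction m generalizing φ with
  | zero => simp [chainSum, Kfun_zero, Pi.single_apply]
  | succ m ih =>
    have term_snoc (p : ℕ × (Fin m → ℕ)) :
        φ (Kfun (m + 1) (Fin.snocEquiv (fun _ ↦ ℕ) p) (m + 1)) * ∏ i ∈ range (m + 1),
            w i (Kfun (m + 1) (Fin.snocEquiv (fun _ ↦ ℕ) p) i)
              (Kfun (m + 1) (Fin.snocEquiv (fun _ ↦ ℕ) p) (i + 1))
          = φ p.1 * (w m (Kfun m p.2 m) p.1 *
            ∏ i ∈ range m, w i (Kfun m p.2 i) (Kfun m p.2 (i + 1))) := by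
      simp only [Fin.snocEquiv, Equiv.coe_fn_mk]
      rw [prod_range_succ, Kfun_snoc_last, Kfun_snoc_of_le _ _ le_rfl, mul_comm (w m _ _)]
      congr 2
      refine prod_congr rfl fun i hi ↦ ?_
      rw [Kfun_snoc_of_le _ _ (mem_range.mp hi).le, Kfun_snoc_of_le _ _ (mem_range.mp hi)]
    have hsum := summable_mul_prod_Kfun hρ₀ hρ hw hφ (m + 1)
    rw [← (Fin.snocEquiv fun _ ↦ ℕ).summable_iff] at hsum
    rw [← (Fin.snocEquiv fun _ ↦ ℕ).tsum_eq]
    simp only [Function.comp_def, term_snoc] at hsum ⊢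
    rw [hsum.tsum_prod]
    refine tsum_congr fun n ↦ ?_
    simp only [tsum_mul_left]
    rw [chainSum, ih (φ := fun j ↦ w m j n) ((hw m).comp_tendsto (k := fun j ↦ (j, n)) tendsto_top)]

end Chain

section TransferWeights

variable {q x : ℂ}

/-- The factor of `Hterm q x m a` linking `k = k_i` to `n = k_{i+1}`. -/
noncomputable def linkWeight (q x : ℂ) (a i k n : ℕ) : ℂ :=
  (if i ≤ a then x ^ 2 else x ^ 2 * q) ^ k * q ^ (k ^ 2) * qBinom q (if i = a then n + 1 else n) k

lemma linkWeight_zero (hq : ∀ n, qPoch q q n ≠ 0) (x : ℂ) (a i n : ℕ) :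
    linkWeight q x a i 0 n = 1 := by
  simp [linkWeight, qBinom_zero_right hq]

lemma isBigO_linkWeight (hq : ‖q‖ < 1) (hx : ‖x‖ < 1) (a i : ℕ) :
    (fun p : ℕ × ℕ ↦ linkWeight q x a i p.1 p.2) =O[⊤] fun p ↦ ‖x‖ ^ p.1 := by
  have hbase : ‖if i ≤ a then x ^ 2 else x ^ 2 * q‖ ≤ ‖x‖ := by
    have hsq : ‖x ^ 2‖ ≤ ‖x‖ := by
      rw [norm_pow]
      exact pow_le_of_le_one (norm_nonneg x) hx.le two_ne_zero
    split_ifs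
    · exact hsq
    · rw [norm_mul]
      exact (mul_le_of_le_one_right (norm_nonneg _) hq.le).trans hsq
  simpa only [Function.comp_def, mul_one, linkWeight, baileyEigenvalue] using
    ((isBigO_baileyEigenvalue hq hbase).comp_tendsto (k := Prod.fst) tendsto_top).mul
      ((isBigO_qBinom hq).comp_tendsto
        (k := fun p : ℕ × ℕ ↦ (if i = a then p.2 + 1 else p.2, p.1)) tendsto_top)

lemma Hterm_eq_mul_prod_linkWeight (hq : ∀ n, qPoch q q n ≠ 0) {m a : ℕ} (ha : a < m)
    (k : Fin m → ℕ) :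
    Hterm q x m a k = qPoch q x (Kfun m k m + 1) * x ^ (Kfun m k m) *
      ∏ i ∈ range m, linkWeight q x a i (Kfun m k i) (Kfun m k (i + 1)) := by
  have weight_lt {i : ℕ} (hi : i ∈ Ico 1 a) (j n : ℕ) :
      linkWeight q x a i j n = q ^ (j ^ 2) * x ^ (2 * j) * qBinom q n j := by
    have hia := (mem_Ico.mp hi).2
    rw [linkWeight, if_pos hia.le, if_neg hia.ne]
    ring
  have weight_self (j n : ℕ) :
      linkWeight q x a a j n = q ^ (j ^ 2) * x ^ (2 * j) * qBinom q (n + 1) j := by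
    rw [linkWeight, if_pos le_rfl, if_pos rfl]
    ring
  have weight_gt {i : ℕ} (hi : i ∈ Ico (a + 1) m) (j n : ℕ) :
      linkWeight q x a i j n = q ^ (j ^ 2 + j) * x ^ (2 * j) * qBinom q n j := by
    have hia : a < i := (mem_Ico.mp hi).1
    rw [linkWeight, if_neg hia.not_ge, if_neg hia.ne']
    ring
  have drop_zero (f : ℕ → ℂ) (hf : f 0 = 1) : ∏ i ∈ range a, f i = ∏ i ∈ Ico 1 a, f i := by
    obtain _ | a := a
    · rfl
    · rw [range_eq_Ico, prod_eq_prod_Ico_succ_bot a.succ_pos, hf, one_mul]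
  rw [range_eq_Ico, ← prod_Ico_consecutive _ a.zero_le ha.le, ← range_eq_Ico,
    prod_eq_prod_Ico_succ_bot ha, weight_self, prod_congr rfl fun i hi ↦ weight_gt hi _ _,
    drop_zero _ (by rw [Kfun_zero, linkWeight_zero hq]),
    prod_congr rfl fun i hi ↦ weight_lt hi _ _, Hterm]
  ring

lemma tsum_mul_qBinom_mul (A : ℂ) (β : ℕ → ℂ) (n : ℕ) :
    ∑' k, A ^ k * q ^ (k ^ 2) * qBinom q n k * β k = baileyTransform q A β n := by
  refine tsum_eq_sum fun k hk ↦ ?_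
  rw [qBinom_of_lt (by simpa [Nat.succ_le_iff] using hk), mul_zero, zero_mul]

lemma chainSum_linkWeight_of_le {a i : ℕ} (hi : i ≤ a) :
    chainSum (linkWeight q x a) i = (baileyTransform q (x ^ 2))^[i] (Pi.single 0 1) := by
  induction i with
  | zero => rfl
  | succ i ih =>
    ext n
    rw [chainSum, ih (by lia), Function.iterate_succ_apply', ← tsum_mul_qBinom_mul]
    simp only [linkWeight, if_pos (Nat.le_of_succ_le hi), if_neg (Nat.ne_of_lt hi)]

lemma chainSum_linkWeight_add (a M : ℕ) :
    chainSum (linkWeight q x a) (a + 1 + M) = (baileyTransform q (x ^ 2 * q))^[M]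
      (fun n ↦ (baileyTransform q (x ^ 2))^[a + 1] (Pi.single 0 1) (n + 1)) := by
  induction M with
  | zero =>
    ext n
    rw [add_zero, chainSum, chainSum_linkWeight_of_le le_rfl, Function.iterate_zero_apply,
      Function.iterate_succ_apply', ← tsum_mul_qBinom_mul]
    simp only [linkWeight, if_pos le_rfl, if_true]
  | succ M ih =>
    ext n
    rw [← add_assoc, chainSum, ih, Function.iterate_succ_apply' (baileyTransform q (x ^ 2 * q)),
      ← tsum_mul_qBinom_mul]
    simp only [linkWeight, if_neg (show ¬a + 1 + M ≤ a by lia), if_neg (show a + 1 + M ≠ a by lia)]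

theorem Hm_eq_tsum_iterate_baileyTransform (hq : ‖q‖ < 1) (hx : ‖x‖ < 1) (a M : ℕ) :
    Hm q (a + 1 + M) a x = ∑' n, qPoch q x (n + 1) * x ^ n * (baileyTransform q (x ^ 2 * q))^[M]
      (fun n ↦ (baileyTransform q (x ^ 2))^[a + 1] (Pi.single 0 1) (n + 1)) n := by
  simp only [Hm, Hterm_eq_mul_prod_linkWeight (qPoch_ne_zero_of_norm_lt_one hq hq)
    (show a < a + 1 + M by lia)]
  rw [tsum_mul_prod_Kfun (φ := fun n ↦ qPoch q x (n + 1) * x ^ n) (norm_nonneg x) hx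
    (isBigO_linkWeight hq hx a) (isBigO_qPoch_succ_mul_pow hq x), chainSum_linkWeight_add]

end TransferWeights

section SingleSeries

variable {q x : ℂ}

lemma isBigO_shiftedBaileyAlpha (hq : ‖q‖ < 1) (A : ℂ) :
    shiftedBaileyAlpha q A =O[⊤] fun _ ↦ (1 : ℝ) := by
  have hunit : (fun r : ℕ ↦ (-1 : ℂ) ^ r * q ^ (r + 1).choose 2) =O[⊤] fun _ ↦ (1 : ℝ) := by
    refine .of_norm_le fun r ↦ ?_
    simpa using pow_le_one₀ (norm_nonneg q) hq.le
  have hden := isBigO_inv_qPoch hq (qPoch_ne_zero_of_norm_lt_one hq hq)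
  refine (((isBigO_qPoch hq (A * q)).mul hunit).mul hden).congr (fun r ↦ ?_) fun _ ↦ by norm_num
  rw [shiftedBaileyAlpha]
  ring

/-- The coefficients of the Bailey pair, relative to `x ^ 2 * q`, of the iterated transform
evaluated by `Hm q (a + 1 + M) a x`. -/
noncomputable def iteratedBaileyAlpha (q x : ℂ) (a M r : ℕ) : ℂ :=
  shiftedBaileyAlpha q (x ^ 2) r *
    (baileyEigenvalue q (x ^ 2) r ^ (a + 1) - baileyEigenvalue q (x ^ 2) (r + 1) ^ (a + 1)) *
    baileyEigenvalue q (x ^ 2 * q) r ^ M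

lemma isBaileyPair_iteratedBaileyAlpha (hq : ∀ n, qPoch q q n ≠ 0)
    (hx : ∀ n, qPoch q (x ^ 2) n ≠ 0) (a M : ℕ) :
    IsBaileyPair q (x ^ 2 * q) (iteratedBaileyAlpha q x a M) ((baileyTransform q (x ^ 2 * q))^[M]
      (fun n ↦ (baileyTransform q (x ^ 2))^[a + 1] (Pi.single 0 1) (n + 1))) :=
  (((isBaileyPair_unit hq hx).iterate_transform hq hx (a + 1)).shift hq hx
    ).iterate_transform hq (qPoch_mul_ne_zero hx) M

lemma summable_iteratedBaileyAlpha (hq : ‖q‖ < 1) (hx : ‖x‖ < 1) (a M : ℕ) :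
    Summable (iteratedBaileyAlpha q x a M) := by
  have hx₂ := norm_sq_lt_one hx
  have hpower : Summable fun r ↦ baileyEigenvalue q (x ^ 2) r ^ (a + 1) := by
    refine summable_of_isBigO (summable_geometric_of_lt_one (norm_nonneg _) hx₂) (.mono ?_ le_top)
    simpa only [pow_succ, one_pow, one_mul] using
      ((isBigO_baileyEigenvalue hq hx₂.le).pow a).mul (isBigO_baileyEigenvalue hq le_rfl)
  have hdifference := (hpower.sub ((summable_nat_add_iff 1).mpr hpower)).norm
  refine summable_of_isBigO hdifference (.mono ?_ le_top)
  have hdifference_self := (isBigO_refl (fun r ↦ baileyEigenvalue q (x ^ 2) r ^ (a + 1)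
    - baileyEigenvalue q (x ^ 2) (r + 1) ^ (a + 1)) ⊤).norm_right
  have hbound := ((isBigO_shiftedBaileyAlpha hq (x ^ 2)).mul hdifference_self).mul
    ((isBigO_baileyEigenvalue hq (norm_sq_mul_lt_one hq hx).le).pow M)
  exact hbound.congr (fun _ ↦ rfl) fun _ ↦ by simp only [one_pow, one_mul, mul_one]

/-- The terms of the single series that sums to `Hm q (a + 1 + M) a x`. -/
noncomputable def baileySeriesTerm (q x : ℂ) (a M r : ℕ) : ℂ :=
  (-1) ^ r * q ^ (r + 1).choose 2 * x ^ r *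
    (baileyEigenvalue q (x ^ 2) r ^ (a + 1) - baileyEigenvalue q (x ^ 2) (r + 1) ^ (a + 1)) *
    baileyEigenvalue q (x ^ 2 * q) r ^ M

theorem hasSum_baileySeriesTerm (hq : ‖q‖ < 1) (hx : ‖x‖ < 1) (a M : ℕ) :
    HasSum (baileySeriesTerm q x a M) (Hm q (a + 1 + M) a x) := by
  have hq_ne := qPoch_ne_zero_of_norm_lt_one hq hq
  have hx_ne := qPoch_ne_zero_of_norm_lt_one hq (norm_sq_lt_one hx)
  rw [Hm_eq_tsum_iterate_baileyTransform hq hx]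
  have hpair := isBaileyPair_iteratedBaileyAlpha hq_ne hx_ne a M
  convert hpair.hasSum hq hx (summable_iteratedBaileyAlpha hq hx a M) with r
  have hr := hq_ne r
  have hr' := qPoch_sq_mul_ne_zero hq hx r
  rw [baileySeriesTerm, iteratedBaileyAlpha, shiftedBaileyAlpha]
  generalize qPoch q (x ^ 2 * q) r = P at hr' ⊢
  field_simp

lemma baileySeriesTerm_zero (q x : ℂ) (a M : ℕ) :
    baileySeriesTerm q x a M 0 = 1 - q ^ (a + 1) * x ^ (2 * a + 2) := by
  simp only [baileySeriesTerm, baileyEigenvalue, Nat.choose_eq_zero_of_lt, zero_add, Nat.one_lt_two]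
  ring

lemma baileyEigenvalue_succ (q A : ℂ) (r : ℕ) :
    baileyEigenvalue q A (r + 1) = A * q * baileyEigenvalue q (q ^ 2 * A) r := by
  simp only [baileyEigenvalue]
  ring

lemma baileySeriesTerm_succ (q x : ℂ) (a M r : ℕ) :
    baileySeriesTerm q x a M (r + 1)
      = -(q ^ (2 * M + a + 2) * x ^ (2 * (a + 1 + M) + 1)) * baileySeriesTerm q (q * x) a M r := by
  rw [baileySeriesTerm, baileySeriesTerm, choose_two_succ (r + 1)]
  simp only [baileyEigenvalue_succ q (x ^ 2), baileyEigenvalue_succ q (x ^ 2 * q), ← mul_assoc,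
    ← mul_pow]
  ring

end SingleSeries

theorem stmt_9 (m a : ℕ) (hm : 1 ≤ m) (ha : a < m) (q x : ℂ)
    (hq : ‖q‖ < 1) (hx : ‖x‖ < 1) :
    Hm q m a x
      = 1 - q ^ (a + 1) * x ^ (2 * a + 2)
        - q ^ (2 * m - a) * x ^ (2 * m + 1) * Hm q m a (q * x) := by
  obtain ⟨M, rfl⟩ := Nat.exists_eq_add_of_le (Nat.succ_le_of_lt ha)
  have hqx : ‖q * x‖ < 1 := by
    rw [norm_mul]
    exact mul_lt_one_of_nonneg_of_lt_one_left (norm_nonneg q) hq hx.le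
  have hseries := hasSum_baileySeriesTerm hq hx a M
  calc Hm q (a + 1 + M) a x
      = baileySeriesTerm q x a M 0 + ∑' r, baileySeriesTerm q x a M (r + 1) := by
        rw [← hseries.tsum_eq, hseries.summable.tsum_eq_zero_add]
    _ = 1 - q ^ (a + 1) * x ^ (2 * a + 2)
        - q ^ (2 * M + a + 2) * x ^ (2 * (a + 1 + M) + 1) * Hm q (a + 1 + M) a (q * x) := by
        simp only [baileySeriesTerm_zero, baileySeriesTerm_succ, tsum_mul_left,
          (hasSum_baileySeriesTerm hq hqx a M).tsum_eq]
        ring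
    _ = _ := by rw [show 2 * (a + 1 + M) - a = 2 * M + a + 2 by lia]
end

section
/- Let m ≥ 1 and 0 ≤ a ≤ m−1 be integers. Then for every real x > 0, sinh(2(a+1)x) / cosh((2m+1)x) = Σ_{n=1}^∞ χ_{8m+4}^{(a)}(n) · e^{−n x}, the series converging absolutely. -/
/-- The (8m+4)-periodic function `χ_{8m+4}^{(a)}`. -/
def chiGen (m a n : ℕ) : ℤ :=
  if n % (8 * m + 4) = (2 * m - 2 * a - 1) % (8 * m + 4) then 1
  else if n % (8 * m + 4) = (6 * m + 2 * a + 5) % (8 * m + 4) then 1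
  else if n % (8 * m + 4) = (2 * m + 2 * a + 3) % (8 * m + 4) then -1
  else if n % (8 * m + 4) = (6 * m - 2 * a + 1) % (8 * m + 4) then -1
  else 0

/-!
Adding the half period `4m + 2` to `n` changes the sign of `χ(n)`, and on `0 ≤ n < 4m + 2` the only
nonzero values are `1` at `2m - 2a - 1` and `-1` at `2m + 2a + 3`. With `q = e^{-z}` the series is
therefore geometric in blocks, with ratio `-q^{4m+2}`, and its sum is
`(q^{2m-2a-1} - q^{2m+2a+3}) / (1 + q^{4m+2})`. Dividing numerator and denominator by `q^{2m+1}`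
gives `sinh (2(a+1)z) / cosh ((2m+1)z)`, for every complex `z` with positive real part.
-/

section QuasiPeriodicSeries

variable {𝕜 : Type*} [NormedField 𝕜] [CompleteSpace 𝕜] {N : ℕ} {q r : 𝕜}

theorem hasSum_of_apply_add_eq_mul (hN : N ≠ 0) {g : ℕ → 𝕜} (hg : ∀ n, g (n + N) = r * g n)
    (hr : ‖r‖ < 1) : HasSum g ((∑ i ∈ Finset.range N, g i) / (1 - r)) := by
  have : NeZero N := ⟨hN⟩
  have apply_add_mul (i k : ℕ) : g (i + k * N) = r ^ k * g i := by
    induction k with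
    | zero => simp
    | succ k ih => rw [Nat.succ_mul, ← add_assoc, hg, ih, pow_succ', mul_assoc]
  have hsummable : Summable fun p : ℕ × Fin N ↦ r ^ p.1 * g p.2 :=
    summable_mul_of_summable_norm (g := fun i : Fin N ↦ g i)
      (summable_norm_geometric_of_norm_lt_one hr) .of_finite
  have hblocks : HasSum (fun p : ℕ × Fin N ↦ r ^ p.1 * g p.2) ((1 - r)⁻¹ * ∑ i : Fin N, g i) :=
    HasSum.mul (g := fun i : Fin N ↦ g i) (hasSum_geometric_of_norm_lt_one hr) (hasSum_fintype _)
      hsummable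
  rw [← (Nat.divModEquiv N).symm.hasSum_iff, Finset.sum_range, div_eq_inv_mul]
  refine hblocks.congr_fun fun p ↦ ?_
  simp [Nat.divModEquiv, add_comm, apply_add_mul]

theorem hasSum_mul_pow_of_antiperiodic {f : ℕ → 𝕜} (hf : Function.Antiperiodic f N)
    (hN : N ≠ 0) (hq : ‖q‖ < 1) :
    HasSum (fun n ↦ f n * q ^ n) ((∑ i ∈ Finset.range N, f i * q ^ i) / (1 + q ^ N)) := by
  have hratio : ‖-q ^ N‖ < 1 := by
    rw [norm_neg, norm_pow]
    exact pow_lt_one₀ (norm_nonneg q) hq hN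
  rw [← sub_neg_eq_add 1]
  refine hasSum_of_apply_add_eq_mul hN (fun n ↦ ?_) hratio
  rw [hf, pow_add]
  ring

end QuasiPeriodicSeries

section chiGen

variable {m a n : ℕ}

theorem chiGen_of_lt_half_period (ha : a < m) (hn : n < 4 * m + 2) :
    chiGen m a n
      = (if n = 2 * m - 2 * a - 1 then 1 else 0) - (if n = 2 * m + 2 * a + 3 then 1 else 0) := by
  unfold chiGen
  iterate 5 rw [Nat.mod_eq_of_lt (b := 8 * m + 4) (by omega)]
  grind

theorem chiGen_antiperiodic (ha : a < m) : Function.Antiperiodic (chiGen m a) (4 * m + 2) := by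
  intro n
  have hmod : n % (8 * m + 4) < 8 * m + 4 := Nat.mod_lt _ (by omega)
  unfold chiGen
  rw [Nat.add_mod_eq_ite, Nat.mod_eq_of_lt (a := 4 * m + 2) (by omega),
    Nat.mod_eq_of_lt (a := 2 * m - 2 * a - 1) (by omega),
    Nat.mod_eq_of_lt (a := 6 * m + 2 * a + 5) (by omega),
    Nat.mod_eq_of_lt (a := 2 * m + 2 * a + 3) (by omega),
    Nat.mod_eq_of_lt (a := 6 * m - 2 * a + 1) (by omega)]
  generalize n % (8 * m + 4) = t at hmod ⊢
  grind

theorem chiGen_zero (ha : a < m) : chiGen m a 0 = 0 := by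
  rw [chiGen_of_lt_half_period ha (by omega), if_neg (by omega), if_neg (by omega), sub_zero]

theorem sum_range_chiGen_mul_pow {R : Type*} [CommRing R] (ha : a < m) (q : R) :
    ∑ i ∈ Finset.range (4 * m + 2), (chiGen m a i : R) * q ^ i
      = q ^ (2 * m - 2 * a - 1) - q ^ (2 * m + 2 * a + 3) := by
  have hterm : ∀ i ∈ Finset.range (4 * m + 2), (chiGen m a i : R) * q ^ i
      = (if i = 2 * m - 2 * a - 1 then q ^ i else 0)
        - (if i = 2 * m + 2 * a + 3 then q ^ i else 0) := fun i hi ↦ by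
    simp [chiGen_of_lt_half_period ha (Finset.mem_range.mp hi), sub_mul]
  rw [Finset.sum_congr rfl hterm, Finset.sum_sub_distrib, Finset.sum_ite_eq', Finset.sum_ite_eq',
    if_pos (Finset.mem_range.mpr (by omega)), if_pos (Finset.mem_range.mpr (by omega))]

theorem hasSum_chiGen_mul_pow {𝕜 : Type*} [NormedField 𝕜] [CompleteSpace 𝕜] (ha : a < m) {q : 𝕜}
    (hq : ‖q‖ < 1) :
    HasSum (fun n ↦ (chiGen m a n : 𝕜) * q ^ n)
      ((q ^ (2 * m - 2 * a - 1) - q ^ (2 * m + 2 * a + 3)) / (1 + q ^ (4 * m + 2))) := by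
  have hanti : Function.Antiperiodic (fun n ↦ (chiGen m a n : 𝕜)) (4 * m + 2) := fun n ↦ by
    simp [chiGen_antiperiodic ha n]
  rw [← sum_range_chiGen_mul_pow ha]
  exact hasSum_mul_pow_of_antiperiodic hanti (by omega) hq

end chiGen

theorem sinh_div_cosh_eq_exp (u v : ℂ) :
    Complex.sinh u / Complex.cosh v
      = (Complex.exp (-(v - u)) - Complex.exp (-(v + u))) / (1 + Complex.exp (-(2 * v))) := by
  have hnum : Complex.exp (-(v - u)) - Complex.exp (-(v + u))
      = 2 * Complex.exp (-v) * Complex.sinh u := by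
    rw [mul_right_comm, Complex.two_sinh, sub_mul, ← Complex.exp_add, ← Complex.exp_add]
    ring_nf
  have hden : 1 + Complex.exp (-(2 * v)) = 2 * Complex.exp (-v) * Complex.cosh v := by
    rw [mul_right_comm, Complex.two_cosh, add_mul, ← Complex.exp_add, ← Complex.exp_add,
      add_neg_cancel, Complex.exp_zero]
    ring_nf
  rw [hnum, hden, mul_div_mul_left _ _ (mul_ne_zero two_ne_zero (Complex.exp_ne_zero _))]

theorem sinh_div_cosh_eq_exp_pow {m a : ℕ} (ha : a < m) (z : ℂ) :
    Complex.sinh (2 * ((a : ℂ) + 1) * z) / Complex.cosh ((2 * (m : ℂ) + 1) * z)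
      = (Complex.exp (-z) ^ (2 * m - 2 * a - 1) - Complex.exp (-z) ^ (2 * m + 2 * a + 3))
        / (1 + Complex.exp (-z) ^ (4 * m + 2)) := by
  obtain ⟨d, rfl⟩ := Nat.exists_eq_add_of_lt ha
  have hexponent : 2 * (a + d + 1) - 2 * a - 1 = 2 * d + 1 := by omega
  simp only [sinh_div_cosh_eq_exp, hexponent, ← Complex.exp_nat_mul]
  push_cast
  ring_nf

theorem stmt_16_general (m a : ℕ) (ha : a < m) (z : ℂ) (hz : 0 < z.re) :
    HasSum (fun n : ℕ ↦ (chiGen m a (n + 1) : ℂ) * Complex.exp (-((n : ℂ) + 1) * z))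
      (Complex.sinh (2 * ((a : ℂ) + 1) * z) / Complex.cosh ((2 * (m : ℂ) + 1) * z)) := by
  have hq : ‖Complex.exp (-z)‖ < 1 := by simpa [Complex.norm_exp] using hz
  have hseries := hasSum_chiGen_mul_pow ha hq
  rw [← hasSum_nat_add_iff' 1] at hseries
  simp only [Finset.sum_range_one, chiGen_zero ha, Int.cast_zero, zero_mul, sub_zero] at hseries
  rw [sinh_div_cosh_eq_exp_pow ha]
  refine hseries.congr_fun fun n ↦ ?_
  rw [← Complex.exp_nat_mul]
  push_cast
  ring_nf

theorem stmt_16 (m a : ℕ) (hm : 1 ≤ m) (ha : a < m) (x : ℝ) (hx : 0 < x) :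
    Summable (fun n : ℕ => (chiGen m a (n + 1) : ℝ) * Real.exp (-((n : ℝ) + 1) * x)) ∧
    Real.sinh (2 * ((a : ℝ) + 1) * x) / Real.cosh ((2 * (m : ℝ) + 1) * x)
      = ∑' n : ℕ, (chiGen m a (n + 1) : ℝ) * Real.exp (-((n : ℝ) + 1) * x) := by
  have hseries : HasSum (fun n : ℕ ↦ (chiGen m a (n + 1) : ℝ) * Real.exp (-((n : ℝ) + 1) * x))
      (Real.sinh (2 * ((a : ℝ) + 1) * x) / Real.cosh ((2 * (m : ℝ) + 1) * x)) :=
    Complex.hasSum_ofReal.mp (by push_cast; exact stmt_16_general m a ha x hx)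
  exact ⟨hseries.summable, hseries.tsum_eq.symm⟩
end

section
/- Let a ≥ c ≥ 0 be integers and let q be a nonzero complex number with q^j ≠ 1 for all 1 ≤ j ≤ a. Then Σ_{b=c}^{a} (−1)^{b+c} · q^{(b(b+1) + c(c+1))/2} / ((q;q)_{a−b}·(q;q)_{b−c}) = q^{c²+c} · (q;q)_a / ((q;q)_c·(q;q)_{a−c}). -/
/-!
Put `b = c + k` and `n = a - c`. Up to the factor `q ^ (c ^ 2 + c) / (q;q)_n`, the sum becomes
`∑ k, (-1) ^ k q ^ (k choose 2) [n, k]_q x ^ k` at `x = q ^ (c + 1)`, which by the `q`-binomial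
theorem is `(q ^ (c + 1); q)_n = (q;q)_a / (q;q)_c`.
-/

section CommRing

open Finset

variable {R : Type*} [CommRing R]

/-- The finite `q`-Pochhammer symbol `(x;q)_n` over a commutative ring; for `R = ℂ` it unfolds to
the same product as `qPoch`. -/
def qPochhammer (q x : R) (n : ℕ) : R := ∏ i ∈ range n, (1 - x * q ^ i)

/-- The Gaussian binomial coefficient `[n, k]_q`, defined by the `q`-Pascal recurrence so that it
makes sense over any ring and for every `q`, roots of unity included. -/
def gaussBinom (q : R) : ℕ → ℕ → R
  | _, 0 => 1
  | 0, _ + 1 => 0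
  | n + 1, k + 1 => gaussBinom q n k + q ^ (k + 1) * gaussBinom q n (k + 1)

@[simp]
theorem qPochhammer_zero (q x : R) : qPochhammer q x 0 = 1 := by
  simp [qPochhammer]

theorem qPochhammer_add (q x : R) (m n : ℕ) :
    qPochhammer q x (m + n) = qPochhammer q x m * qPochhammer q (x * q ^ m) n := by
  simp only [qPochhammer, prod_range_add, pow_add, mul_assoc]

theorem qPochhammer_succ' (q x : R) (n : ℕ) :
    qPochhammer q x (n + 1) = (1 - x) * qPochhammer q (x * q) n := by
  rw [add_comm, qPochhammer_add, pow_one]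
  simp [qPochhammer]

theorem qPochhammer_self_succ (q : R) (n : ℕ) :
    qPochhammer q q (n + 1) = qPochhammer q q n * (1 - q ^ (n + 1)) := by
  rw [qPochhammer, prod_range_succ, pow_succ', qPochhammer]

@[simp]
theorem gaussBinom_zero_right (q : R) (n : ℕ) : gaussBinom q n 0 = 1 := by
  cases n <;> rfl

theorem gaussBinom_succ_succ (q : R) (n k : ℕ) :
    gaussBinom q (n + 1) (k + 1) = gaussBinom q n k + q ^ (k + 1) * gaussBinom q n (k + 1) :=
  rfl

theorem gaussBinom_eq_zero_of_lt (q : R) {n k : ℕ} (hnk : n < k) : gaussBinom q n k = 0 := by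
  induction n generalizing k with
  | zero => cases k with
    | zero => exact absurd hnk (lt_irrefl 0)
    | succ k => rfl
  | succ n ih => cases k with
    | zero => exact absurd hnk (Nat.not_lt_zero _)
    | succ k =>
      rw [gaussBinom_succ_succ, ih (by omega), ih (by omega), mul_zero, add_zero]

theorem gaussBinom_mul_qPochhammer_mul_qPochhammer (q : R) (k m : ℕ) :
    gaussBinom q (k + m) k * qPochhammer q q k * qPochhammer q q m = qPochhammer q q (k + m) := by
  induction k generalizing m with
  | zero => simp
  | succ k ihk =>
    induction m with
    | zero =>
      have hk := ihk 0
      simp only [add_zero, qPochhammer_zero, mul_one] at hk ⊢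
      rw [gaussBinom_succ_succ, gaussBinom_eq_zero_of_lt q (Nat.lt_succ_self k),
        qPochhammer_self_succ]
      linear_combination (1 - q ^ (k + 1)) * hk
    | succ m ihm =>
      have hk := ihk (m + 1)
      rw [show k + 1 + m = k + (m + 1) by omega] at ihm
      rw [show k + 1 + (m + 1) = k + (m + 1) + 1 by omega, gaussBinom_succ_succ,
        qPochhammer_self_succ q (k + (m + 1))]
      rw [qPochhammer_self_succ q m] at hk ⊢
      rw [qPochhammer_self_succ q k] at ihm ⊢
      -- `1 - q ^ (k + m + 2) = (1 - q ^ (k + 1)) + q ^ (k + 1) * (1 - q ^ (m + 1))`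
      linear_combination (1 - q ^ (k + 1)) * hk + q ^ (k + 1) * (1 - q ^ (m + 1)) * ihm

theorem qPochhammer_eq_sum_gaussBinom (q x : R) (n : ℕ) :
    qPochhammer q x n =
      ∑ k ∈ range (n + 1), (-1) ^ k * q ^ k.choose 2 * gaussBinom q n k * x ^ k := by
  induction n generalizing x with
  | zero => simp
  | succ n ih =>
    let t (k : ℕ) : R := (-1) ^ k * q ^ k.choose 2 * gaussBinom q n k * (x * q) ^ k
    have t_last : t (n + 1) = 0 := by
      simp [t, gaussBinom_eq_zero_of_lt q (Nat.lt_succ_self n)]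
    have t_pascal (k : ℕ) :
        (-1) ^ (k + 1) * q ^ (k + 1).choose 2 * gaussBinom q (n + 1) (k + 1) * x ^ (k + 1) =
          t (k + 1) - x * t k := by
      simp only [t, gaussBinom_succ_succ, Nat.choose_succ_succ' k 1, Nat.choose_one_right]
      ring
    calc qPochhammer q x (n + 1)
        = (1 - x) * ∑ k ∈ range (n + 1), t k := by rw [qPochhammer_succ', ih]
      _ = ∑ k ∈ range (n + 2), t k - x * ∑ k ∈ range (n + 1), t k := by
        rw [sum_range_succ t (n + 1), t_last]; ring
      _ = ∑ k ∈ range (n + 1), (t (k + 1) - x * t k) + t 0 := by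
        rw [sum_range_succ' t (n + 1), sum_sub_distrib, mul_sum]; ring
      _ = _ := by
        rw [sum_range_succ' _ (n + 1), sum_congr rfl fun k _ => t_pascal k]
        simp [t]

theorem mul_succ_add_mul_succ_div_two (c k : ℕ) :
    ((c + k) * (c + k + 1) + c * (c + 1)) / 2 = c ^ 2 + c + k.choose 2 + (c + 1) * k := by
  have two_mul_choose : k.choose 2 * 2 + k = k * k := by
    cases k with
    | zero => rfl
    | succ k =>
      have absorption := Nat.add_one_mul_choose_eq k 1
      rw [Nat.choose_one_right] at absorption
      linarith
  apply Nat.div_eq_of_eq_mul_left two_pos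
  linarith

theorem sum_Icc_neg_one_pow_mul_gaussBinom (q : R) {a c : ℕ} (hca : c ≤ a) :
    ∑ b ∈ Icc c a, (-1) ^ (b + c) * q ^ ((b * (b + 1) + c * (c + 1)) / 2) *
        gaussBinom q (a - c) (b - c) =
      q ^ (c ^ 2 + c) * qPochhammer q (q ^ (c + 1)) (a - c) := by
  rw [← Ico_add_one_right_eq_Icc, sum_Ico_eq_sum_range, Nat.sub_add_comm hca,
    qPochhammer_eq_sum_gaussBinom, mul_sum]
  refine sum_congr rfl fun k _ => ?_
  have sign : (-1 : R) ^ (c + k + c) = (-1) ^ k := by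
    rw [show c + k + c = k + (c + c) by omega, pow_add, (Even.add_self c).neg_one_pow, mul_one]
  rw [sign, mul_succ_add_mul_succ_div_two, Nat.add_sub_cancel_left, pow_add, pow_add, pow_mul]
  ring

end CommRing

section Field

open Finset

variable {K : Type*} [Field K]

theorem qPochhammer_self_ne_zero {q : K} {n : ℕ} (hq : ∀ j, 1 ≤ j → j ≤ n → q ^ j ≠ 1) :
    qPochhammer q q n ≠ 0 := by
  refine prod_ne_zero_iff.mpr fun i hi => ?_
  rw [← pow_succ', sub_ne_zero]
  exact (hq (i + 1) (Nat.succ_pos i) (mem_range.mp hi)).symm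

theorem one_div_qPochhammer_mul_qPochhammer {q : K} {n k : ℕ} (hkn : k ≤ n)
    (hq : ∀ j, 1 ≤ j → j ≤ n → q ^ j ≠ 1) :
    1 / (qPochhammer q q (n - k) * qPochhammer q q k) = gaussBinom q n k / qPochhammer q q n := by
  have ne_zero {m : ℕ} (hm : m ≤ n) : qPochhammer q q m ≠ 0 :=
    qPochhammer_self_ne_zero fun j h1 hj => hq j h1 (hj.trans hm)
  have factor := gaussBinom_mul_qPochhammer_mul_qPochhammer q k (n - k)
  rw [Nat.add_sub_cancel' hkn] at factor
  rw [div_eq_div_iff (mul_ne_zero (ne_zero (n.sub_le k)) (ne_zero hkn)) (ne_zero le_rfl)]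
  linear_combination -factor

theorem stmt_17_general {a c : ℕ} (hca : c ≤ a) {q : K}
    (hq : ∀ j : ℕ, 1 ≤ j → j ≤ a → q ^ j ≠ 1) :
    ∑ b ∈ Icc c a, (-1 : K) ^ (b + c) * q ^ ((b * (b + 1) + c * (c + 1)) / 2) /
        (qPochhammer q q (a - b) * qPochhammer q q (b - c)) =
      q ^ (c ^ 2 + c) * qPochhammer q q a / (qPochhammer q q c * qPochhammer q q (a - c)) := by
  have hc : qPochhammer q q c ≠ 0 :=
    qPochhammer_self_ne_zero fun j h1 hj => hq j h1 (hj.trans hca)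
  have split : qPochhammer q q a = qPochhammer q q c * qPochhammer q (q ^ (c + 1)) (a - c) := by
    rw [pow_succ', ← qPochhammer_add, Nat.add_sub_cancel' hca]
  rw [split, mul_left_comm, mul_div_mul_left _ _ hc, ← sum_Icc_neg_one_pow_mul_gaussBinom q hca,
    sum_div]
  refine sum_congr rfl fun b hb => ?_
  obtain ⟨hcb, hba⟩ := mem_Icc.mp hb
  rw [← mul_one_div, mul_div_assoc, ← one_div_qPochhammer_mul_qPochhammer
    (Nat.sub_le_sub_right hba c) fun j h1 hj => hq j h1 (hj.trans (a.sub_le c)),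
    Nat.sub_sub_sub_cancel_right hcb]

end Field

theorem stmt_17 (a c : ℕ) (hca : c ≤ a) (q : ℂ) (hq0 : q ≠ 0)
    (hq : ∀ j : ℕ, 1 ≤ j → j ≤ a → q ^ j ≠ 1) :
    ∑ b ∈ Finset.Icc c a,
        (-1 : ℂ) ^ (b + c) * q ^ ((b * (b + 1) + c * (c + 1)) / 2) /
          (qPoch q q (a - b) * qPoch q q (b - c))
      = q ^ (c ^ 2 + c) * qPoch q q a / (qPoch q q c * qPoch q q (a - c)) :=
  stmt_17_general hca hq
end
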